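/- arXiv:2602.17504 — 6 statements merged into one kernel-verified Lean document; each statement's English description precedes it below -/
import Mathlib

section
/- Let B, a, ε, D, z be as in the gain-design setup, and let k ∈ ℝ³ with k_i ≥ 0 for all i satisfy (I − D)k = z. Let Ξ be any 3×3 real matrix with |Ξ_ij| ≤ B_ij for all i, j, and let ι ∈ ℝ³ satisfy |ι_i| ≤ a_i for all i. Then for every i ∈ {1,2,3}: −(1 + Ξ_ii)·k_i + Σ_{j≠i} |Ξ_ij|·k_j + |ι_i| ≤ −ε_i. -/
/-- Per-axis gain inequality of Theorem 1 (static gain SMC): any nonnegative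
solution `k` of `(I - D) k = z` satisfies, for every axis `i` and any admissible
uncertainties `Ξ` (with `|Ξ i j| ≤ B i j`) and `ι` (with `|ι i| ≤ a i`),
`-(1 + Ξ i i) * k i + ∑_{j ≠ i} |Ξ i j| * k j + |ι i| ≤ -ε i`. -/
theorem stmt_2 (B : Matrix (Fin 3) (Fin 3) ℝ) (a ε : Fin 3 → ℝ)
    (hB : ∀ i j, 0 ≤ B i j) (hBii : ∀ i, B i i < 1)
    (ha : ∀ i, 0 ≤ a i) (hε : ∀ i, 0 < ε i)
    (D : Matrix (Fin 3) (Fin 3) ℝ)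
    (hD : ∀ i j, D i j = if i = j then 0 else B i j / (1 - B i i))
    (z : Fin 3 → ℝ) (hz : ∀ i, z i = (a i + ε i) / (1 - B i i))
    (k : Fin 3 → ℝ) (hk : ∀ i, 0 ≤ k i) (hsol : (1 - D).mulVec k = z)
    (Ξ : Matrix (Fin 3) (Fin 3) ℝ) (hΞ : ∀ i j, |Ξ i j| ≤ B i j)
    (ι : Fin 3 → ℝ) (hι : ∀ i, |ι i| ≤ a i) :
    ∀ i, -(1 + Ξ i i) * k i + (∑ j ∈ Finset.univ.erase i, |Ξ i j| * k j) + |ι i|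
      ≤ -ε i := by
  intro i
  have hpos : 0 < 1 - B i i := by linarith [hBii i]
  have hrow : k i - ∑ j, D i j * k j = z i := by
    have h := congrFun hsol i
    rw [Matrix.sub_mulVec, Matrix.one_mulVec] at h
    exact h
  have hsum : ∑ j, D i j * k j = (∑ j ∈ Finset.univ.erase i, B i j * k j) / (1 - B i i) := by
    rw [← Finset.add_sum_erase _ _ (Finset.mem_univ i), hD i i, if_pos rfl, zero_mul, zero_add,
      Finset.sum_div]
    refine Finset.sum_congr rfl fun j hj => ?_
    rw [hD i j, if_neg (Finset.ne_of_mem_erase hj).symm]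
    ring
  rw [hsum, hz i] at hrow
  have hkey : (1 - B i i) * k i - (∑ j ∈ Finset.univ.erase i, B i j * k j) = a i + ε i := by
    have hne := hpos.ne'
    field_simp at hrow
    linarith
  have hle : (∑ j ∈ Finset.univ.erase i, |Ξ i j| * k j)
      ≤ ∑ j ∈ Finset.univ.erase i, B i j * k j :=
    Finset.sum_le_sum fun j _ => mul_le_mul_of_nonneg_right (hΞ i j) (hk j)
  have hdiag : -Ξ i i * k i ≤ B i i * k i :=
    mul_le_mul_of_nonneg_right ((neg_le_abs _).trans (hΞ i i)) (hk i)
  linarith [hι i]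
end

section
/- Let B, a, ε, D, z be as in the gain-design setup, and let k ∈ ℝ³ with k_i ≥ 0 for all i satisfy (I − D)k = z. Let Ξ be any 3×3 real matrix with |Ξ_ij| ≤ B_ij for all i, j, and let ι ∈ ℝ³ satisfy |ι_i| ≤ a_i for all i. Then for every s ∈ ℝ³: ⟨s, ι − (I + Ξ)·diag(k)·sgn(s)⟩ ≤ −Σ_{i=1}^{3} ε_i |s_i|; in particular this quantity is strictly negative whenever s ≠ 0. -/
open Matrix

/-- Core Lyapunov-decrease inequality of Theorem 1 (static gain SMC): for any
nonnegative solution `k` of `(I - D) k = z` and any admissible uncertainties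
`Ξ`, `ι`, every `s ∈ ℝ³` satisfies
`⟨s, ι - (I + Ξ) diag(k) sgn(s)⟩ ≤ -∑ i ε i |s i|`, which is strictly negative
whenever `s ≠ 0`. -/
theorem stmt_4 (B : Matrix (Fin 3) (Fin 3) ℝ) (a ε : Fin 3 → ℝ)
    (hB : ∀ i j, 0 ≤ B i j) (hBii : ∀ i, B i i < 1)
    (ha : ∀ i, 0 ≤ a i) (hε : ∀ i, 0 < ε i)
    (D : Matrix (Fin 3) (Fin 3) ℝ)
    (hD : ∀ i j, D i j = if i = j then 0 else B i j / (1 - B i i))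
    (z : Fin 3 → ℝ) (hz : ∀ i, z i = (a i + ε i) / (1 - B i i))
    (k : Fin 3 → ℝ) (hk : ∀ i, 0 ≤ k i) (hsol : (1 - D).mulVec k = z)
    (Ξ : Matrix (Fin 3) (Fin 3) ℝ) (hΞ : ∀ i j, |Ξ i j| ≤ B i j)
    (ι : Fin 3 → ℝ) (hι : ∀ i, |ι i| ≤ a i) :
    ∀ s : Fin 3 → ℝ,
      s ⬝ᵥ (ι - ((1 + Ξ) * Matrix.diagonal k).mulVec (fun i => Real.sign (s i)))
          ≤ -∑ i, ε i * |s i| ∧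
        (s ≠ 0 →
          s ⬝ᵥ (ι - ((1 + Ξ) * Matrix.diagonal k).mulVec (fun i => Real.sign (s i)))
            < 0) := by
  intro s
  have hsgn : ∀ i, |Real.sign (s i)| ≤ 1 := by
    intro i
    rcases Real.sign_apply_eq (s i) with h | h | h <;> rw [h] <;> norm_num
  have hss : ∀ i, s i * Real.sign (s i) = |s i| := by
    intro i
    rcases lt_trichotomy (s i) 0 with h | h | h
    · rw [Real.sign_of_neg h, abs_of_neg h]; ring
    · rw [h]; simp
    · rw [Real.sign_of_pos h, abs_of_pos h]; ring
  have hkey : ∀ i, k i - ∑ j, B i j * k j = a i + ε i := by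
    intro i
    have h1 := congrFun hsol i
    have hpos : (1 - B i i) ≠ 0 := by have := hBii i; linarith
    rw [hz i, Matrix.sub_mulVec, Matrix.one_mulVec, Pi.sub_apply, eq_div_iff hpos] at h1
    have h2 : (D.mulVec k) i * (1 - B i i) = ∑ j, B i j * k j - B i i * k i := by
      have h3 : ∀ j, D i j * k j * (1 - B i i)
          = B i j * k j - if i = j then B i j * k j else 0 := by
        intro j
        rw [hD]
        split_ifs
        · ring
        · field_simp; ring
      simp only [Matrix.mulVec, dotProduct, Finset.sum_mul]
      rw [Finset.sum_congr rfl (fun j _ => h3 j)]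
      simp [Finset.sum_sub_distrib]
    linarith
  have hrow : ∀ i, s i * (ι - ((1 + Ξ) * Matrix.diagonal k).mulVec
      (fun i => Real.sign (s i))) i ≤ -(ε i * |s i|) := by
    intro i
    have he : (ι - ((1 + Ξ) * Matrix.diagonal k).mulVec (fun i => Real.sign (s i))) i
        = ι i - k i * Real.sign (s i) - ∑ j, Ξ i j * (k j * Real.sign (s j)) := by
      rw [← Matrix.mulVec_mulVec, Matrix.add_mulVec, Matrix.one_mulVec, Pi.sub_apply,
        Pi.add_apply, Matrix.mulVec_diagonal]
      simp only [Matrix.mulVec, dotProduct, Matrix.diagonal_apply, ite_mul, zero_mul,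
        Finset.sum_ite_eq, Finset.mem_univ, if_true]
      ring
    have hS : |∑ j, Ξ i j * (k j * Real.sign (s j))| ≤ ∑ j, B i j * k j := by
      refine (Finset.abs_sum_le_sum_abs _ _).trans (Finset.sum_le_sum fun j _ => ?_)
      rw [abs_mul, abs_mul, abs_of_nonneg (hk j)]
      exact mul_le_mul (hΞ i j) (mul_le_of_le_one_right (hk j) (hsgn j))
        (mul_nonneg (hk j) (abs_nonneg _)) (hB i j)
    rw [he]
    have h1 : s i * (ι i - ∑ j, Ξ i j * (k j * Real.sign (s j)))
        ≤ |s i| * (a i + ∑ j, B i j * k j) := by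
      refine (le_abs_self _).trans ?_
      rw [abs_mul]
      exact mul_le_mul_of_nonneg_left ((abs_sub _ _).trans (add_le_add (hι i) hS))
        (abs_nonneg _)
    have h2 : ε i = k i - ∑ j, B i j * k j - a i := by linarith [hkey i]
    rw [h2]
    have h3 : k i * (s i * Real.sign (s i)) = k i * |s i| := by rw [hss i]
    linarith
  have hmain : s ⬝ᵥ (ι - ((1 + Ξ) * Matrix.diagonal k).mulVec (fun i => Real.sign (s i)))
      ≤ -∑ i, ε i * |s i| := by
    rw [← Finset.sum_neg_distrib]
    exact Finset.sum_le_sum fun i _ => hrow i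
  refine ⟨hmain, fun hs => lt_of_le_of_lt hmain ?_⟩
  obtain ⟨i, hi⟩ := Function.ne_iff.mp hs
  rw [neg_lt_zero]
  exact Finset.sum_pos' (fun j _ => mul_nonneg (hε j).le (abs_nonneg _))
    ⟨i, Finset.mem_univ i, mul_pos (hε i) (abs_pos.mpr hi)⟩
end

section
/- Let B, a, ε, D, z be as in the gain-design setup, and let k_d ∈ ℝ³ with k_{d,i} ≥ 0 for all i satisfy (I − D)k_d = z. Let Ξ be any 3×3 real matrix with |Ξ_ij| ≤ B_ij for all i, j, and let ι ∈ ℝ³ satisfy |ι_i| ≤ a_i for all i. Then for every k ∈ ℝ³ with 0 ≤ k_i ≤ k_{d,i} for all i, and every i ∈ {1,2,3}: −(1 + Ξ_ii)·k_i + Σ_{j≠i} |Ξ_ij|·k_j + |ι_i| + (1 − B_ii)·(k_i − k_{d,i}) ≤ −ε_i. -/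
open Matrix

/-- Per-axis inequality in the proof of Theorem 2 (adaptive gain SMC): if the
static gains `k_d` solve `(I - D) k_d = z` and the adaptive gains satisfy
`0 ≤ k i ≤ k_d i`, then for admissible uncertainties `Ξ`, `ι`,
`-(1 + Ξ i i) k i + ∑_{j ≠ i} |Ξ i j| k j + |ι i| + (1 - B i i)(k i - k_d i)
  ≤ -ε i` for every axis `i`. -/
theorem stmt_7 (B : Matrix (Fin 3) (Fin 3) ℝ) (a ε : Fin 3 → ℝ)
    (hB : ∀ i j, 0 ≤ B i j) (hBii : ∀ i, B i i < 1)
    (ha : ∀ i, 0 ≤ a i) (hε : ∀ i, 0 < ε i)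
    (D : Matrix (Fin 3) (Fin 3) ℝ)
    (hD : ∀ i j, D i j = if i = j then 0 else B i j / (1 - B i i))
    (z : Fin 3 → ℝ) (hz : ∀ i, z i = (a i + ε i) / (1 - B i i))
    (kd : Fin 3 → ℝ) (hkd : ∀ i, 0 ≤ kd i) (hsol : (1 - D).mulVec kd = z)
    (Ξ : Matrix (Fin 3) (Fin 3) ℝ) (hΞ : ∀ i j, |Ξ i j| ≤ B i j)
    (ι : Fin 3 → ℝ) (hι : ∀ i, |ι i| ≤ a i) :
    ∀ k : Fin 3 → ℝ, (∀ i, 0 ≤ k i ∧ k i ≤ kd i) →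
      ∀ i, -(1 + Ξ i i) * k i + (∑ j ∈ Finset.univ.erase i, |Ξ i j| * k j) + |ι i|
          + (1 - B i i) * (k i - kd i)
        ≤ -ε i := by
  intro k hk i
  have hpos : 0 < 1 - B i i := by linarith [hBii i]
  have hrow : kd i - ∑ j, D i j * kd j = z i := by
    have h := congrFun hsol i
    rw [Matrix.sub_mulVec, Matrix.one_mulVec] at h
    exact h
  have hsum : ∑ j, D i j * kd j
      = (∑ j ∈ Finset.univ.erase i, B i j * kd j) / (1 - B i i) := by
    rw [← Finset.add_sum_erase Finset.univ _ (Finset.mem_univ i), Finset.sum_div, hD i i]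
    simp only [if_true, zero_mul, zero_add]
    refine Finset.sum_congr rfl fun j hj => ?_
    rw [hD i j, if_neg (Finset.ne_of_mem_erase hj).symm]
    ring
  have hkey : (1 - B i i) * kd i
      = (∑ j ∈ Finset.univ.erase i, B i j * kd j) + (a i + ε i) := by
    rw [hsum, hz i] at hrow
    field_simp at hrow
    linarith
  have hle : ∑ j ∈ Finset.univ.erase i, |Ξ i j| * k j
      ≤ ∑ j ∈ Finset.univ.erase i, B i j * kd j :=
    Finset.sum_le_sum fun j _ => mul_le_mul (hΞ i j) (hk j).2 (hk j).1 (hB i j)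
  have hdiag : 0 ≤ (B i i + Ξ i i) * k i :=
    mul_nonneg (by linarith [(abs_le.mp (hΞ i i)).1]) (hk i).1
  nlinarith [hι i]
end

section
/- Let B, a, ε, D, z be as in the gain-design setup, and let k_d ∈ ℝ³ with k_{d,i} ≥ 0 for all i satisfy (I − D)k_d = z. Let Ξ be any 3×3 real matrix with |Ξ_ij| ≤ B_ij for all i, j, and let ι ∈ ℝ³ satisfy |ι_i| ≤ a_i for all i. Then for every s ∈ ℝ³ and every k ∈ ℝ³ with 0 ≤ k_i ≤ k_{d,i} for all i: ⟨s, ι − (I + Ξ)·diag(k)·sgn(s)⟩ + Σ_{i=1}^{3} (1 − B_ii)·(k_i − k_{d,i})·|s_i| ≤ −Σ_{i=1}^{3} ε_i |s_i|. -/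
open Matrix

/-- Core Lyapunov-decrease inequality of Theorem 2 (RASMC): for the static gains
`k_d` solving `(I - D) k_d = z`, admissible uncertainties `Ξ`, `ι`, every
`s ∈ ℝ³`, and adaptive gains `0 ≤ k i ≤ k_d i`,
`⟨s, ι - (I + Ξ) diag(k) sgn(s)⟩ + ∑ i (1 - B i i)(k i - k_d i)|s i|
  ≤ -∑ i ε i |s i|`. -/
theorem stmt_8 (B : Matrix (Fin 3) (Fin 3) ℝ) (a ε : Fin 3 → ℝ)
    (hB : ∀ i j, 0 ≤ B i j) (hBii : ∀ i, B i i < 1)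
    (ha : ∀ i, 0 ≤ a i) (hε : ∀ i, 0 < ε i)
    (D : Matrix (Fin 3) (Fin 3) ℝ)
    (hD : ∀ i j, D i j = if i = j then 0 else B i j / (1 - B i i))
    (z : Fin 3 → ℝ) (hz : ∀ i, z i = (a i + ε i) / (1 - B i i))
    (kd : Fin 3 → ℝ) (hkd : ∀ i, 0 ≤ kd i) (hsol : (1 - D).mulVec kd = z)
    (Ξ : Matrix (Fin 3) (Fin 3) ℝ) (hΞ : ∀ i j, |Ξ i j| ≤ B i j)
    (ι : Fin 3 → ℝ) (hι : ∀ i, |ι i| ≤ a i) :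
    ∀ (s : Fin 3 → ℝ) (k : Fin 3 → ℝ), (∀ i, 0 ≤ k i ∧ k i ≤ kd i) →
      s ⬝ᵥ (ι - ((1 + Ξ) * Matrix.diagonal k).mulVec (fun i => Real.sign (s i)))
          + ∑ i, (1 - B i i) * (k i - kd i) * |s i|
        ≤ -∑ i, ε i * |s i| := by
  intro s k hk
  have hsg : ∀ x : ℝ, x * Real.sign x = |x| := by
    intro x
    rcases lt_trichotomy x 0 with h | h | h
    · rw [Real.sign_of_neg h, abs_of_neg h]; ring
    · subst h; simp
    · rw [Real.sign_of_pos h, abs_of_pos h]; ring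
  have hsa : ∀ x : ℝ, |Real.sign x| ≤ 1 := by
    intro x
    rcases Real.sign_apply_eq x with h | h | h <;> rw [h] <;> norm_num
  have hT : ∀ i j, -(s i * (Ξ i j * k j * Real.sign (s j))) ≤ |s i| * (B i j * k j) := by
    intro i j
    refine (neg_le_abs _).trans ?_
    rw [abs_mul, abs_mul, abs_mul, abs_of_nonneg (hk j).1]
    refine mul_le_mul_of_nonneg_left ?_ (abs_nonneg _)
    have h1 : |Ξ i j| * k j ≤ B i j * k j := mul_le_mul_of_nonneg_right (hΞ i j) (hk j).1
    have h0 : 0 ≤ |Ξ i j| * k j := mul_nonneg (abs_nonneg _) (hk j).1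
    exact (mul_le_of_le_one_right h0 (hsa _)).trans h1
  have hO : ∀ i j, |s i| * (B i j * k j) ≤ |s i| * (B i j * kd j) := fun i j =>
    mul_le_mul_of_nonneg_left (mul_le_mul_of_nonneg_left (hk j).2 (hB i j)) (abs_nonneg _)
  have hI : ∀ i, s i * ι i ≤ |s i| * a i := by
    intro i
    refine (le_abs_self _).trans ?_
    rw [abs_mul]
    exact mul_le_mul_of_nonneg_left (hι i) (abs_nonneg _)
  have hS : ∀ i, (1 - B i i) * kd i - (∑ j, B i j * kd j - B i i * kd i) = a i + ε i := by
    intro i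
    have h := congrFun hsol i
    have hp : (1 - B i i) ≠ 0 := by linarith [hBii i]
    rw [hz, Matrix.sub_mulVec, Matrix.one_mulVec, Pi.sub_apply, eq_div_iff hp] at h
    rw [← h]
    have : (D *ᵥ kd) i * (1 - B i i) = ∑ j, B i j * kd j - B i i * kd i := by
      rw [eq_sub_iff_add_eq, Matrix.mulVec, dotProduct, Finset.sum_mul]
      rw [← Finset.add_sum_erase _ _ (Finset.mem_univ i),
        ← Finset.add_sum_erase Finset.univ (fun j => B i j * kd j) (Finset.mem_univ i)]
      have : ∑ j ∈ Finset.univ.erase i, D i j * kd j * (1 - B i i)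
          = ∑ j ∈ Finset.univ.erase i, B i j * kd j := by
        refine Finset.sum_congr rfl fun j hj => ?_
        rw [hD, if_neg (Finset.ne_of_mem_erase hj).symm]
        field_simp
      rw [this, hD i i]
      simp only [if_true]
      ring
    rw [← this]; ring
  rw [dotProduct, ← Finset.sum_add_distrib, ← Finset.sum_neg_distrib]
  refine Finset.sum_le_sum fun i _ => ?_
  have hE : (((1 + Ξ) * Matrix.diagonal k) *ᵥ (fun i => Real.sign (s i))) i
      = k i * Real.sign (s i) + ∑ j, Ξ i j * k j * Real.sign (s j) := by
    rw [add_mul, one_mul, Matrix.add_mulVec, Pi.add_apply, Matrix.mulVec_diagonal]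
    simp [Matrix.mulVec, dotProduct, Matrix.mul_diagonal]
  have hsum : -(s i * ∑ j, Ξ i j * k j * Real.sign (s j))
      ≤ |s i| * (∑ j, B i j * kd j - B i i * kd i) + |s i| * (B i i * k i) := by
    rw [← Finset.add_sum_erase _ _ (Finset.mem_univ i),
      ← Finset.add_sum_erase Finset.univ (fun j => B i j * kd j) (Finset.mem_univ i)]
    have : -(s i * ∑ j ∈ Finset.univ.erase i, Ξ i j * k j * Real.sign (s j))
        ≤ |s i| * ∑ j ∈ Finset.univ.erase i, B i j * kd j := by
      rw [Finset.mul_sum, Finset.mul_sum, ← Finset.sum_neg_distrib]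
      exact Finset.sum_le_sum fun j _ => (hT i j).trans (hO i j)
    have h2 := hT i i
    rw [mul_add]
    linarith
  rw [Pi.sub_apply, hE]
  have e : s i * (k i * Real.sign (s i)) = k i * |s i| := by rw [← hsg]; ring
  have h3 : |s i| * (∑ j, B i j * kd j - B i i * kd i)
      = |s i| * ((1 - B i i) * kd i - (a i + ε i)) := by rw [← hS i]; ring
  rw [h3] at hsum
  have := hI i
  rw [mul_sub, mul_add, e]
  nlinarith
end

section
/- Let B, a, ε, D, z be as in the gain-design setup, let γ_i > 0 for i = 1,2,3, and let k_d ∈ ℝ³ with k_{d,i} ≥ 0 for all i satisfy (I − D)k_d = z. Let s : ℝ → ℝ³ and k : ℝ → ℝ³ be differentiable, and let Ξ : ℝ → (3×3 real matrices) and ι : ℝ → ℝ³ satisfy |Ξ(t)_ij| ≤ B_ij and |ι(t)_i| ≤ a_i for all t ≥ t₀ and all i, j. Suppose that for all t ≥ t₀: (i) 0 ≤ k_i(t) ≤ k_{d,i} for all i; (ii) s'(t) = ι(t) − (I + Ξ(t))·diag(k(t))·sgn(s(t)); (iii) k_i'(t) = (1 − B_ii)·|s_i(t)|/γ_i if k_i(t)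 < k_{d,i}, and k_i'(t) = 0 if k_i(t) = k_{d,i}. Then the function V₂(t) = (1/2)‖s(t)‖² + Σ_{i=1}^{3} (γ_i/2)·(k_i(t) − k_{d,i})² is differentiable and satisfies V₂'(t) ≤ −Σ_{i=1}^{3} ε_i |s_i(t)| for all t ≥ t₀. -/
open Matrix

/-- Trajectory form of Theorem 2 (RASMC): along any closed-loop trajectory with
the gain adaptation law, the augmented Lyapunov function
`V₂ = (1/2) ‖s‖² + ∑ i (γ i / 2) (k i - k_d i)²` is differentiable and
satisfies `V₂' ≤ -∑ i ε i |s i|` for all `t ≥ t₀`. -/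
theorem stmt_11 (B : Matrix (Fin 3) (Fin 3) ℝ) (a ε γ : Fin 3 → ℝ)
    (hB : ∀ i j, 0 ≤ B i j) (hBii : ∀ i, B i i < 1)
    (ha : ∀ i, 0 ≤ a i) (hε : ∀ i, 0 < ε i) (hγ : ∀ i, 0 < γ i)
    (D : Matrix (Fin 3) (Fin 3) ℝ)
    (hD : ∀ i j, D i j = if i = j then 0 else B i j / (1 - B i i))
    (z : Fin 3 → ℝ) (hz : ∀ i, z i = (a i + ε i) / (1 - B i i))
    (kd : Fin 3 → ℝ) (hkd : ∀ i, 0 ≤ kd i) (hsol : (1 - D).mulVec kd = z)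
    (t₀ : ℝ) (s : ℝ → Fin 3 → ℝ) (hs : Differentiable ℝ s)
    (k : ℝ → Fin 3 → ℝ) (hkdiff : Differentiable ℝ k)
    (Ξ : ℝ → Matrix (Fin 3) (Fin 3) ℝ) (ι : ℝ → Fin 3 → ℝ)
    (hΞ : ∀ t, t₀ ≤ t → ∀ i j, |Ξ t i j| ≤ B i j)
    (hι : ∀ t, t₀ ≤ t → ∀ i, |ι t i| ≤ a i)
    (hbound : ∀ t, t₀ ≤ t → ∀ i, 0 ≤ k t i ∧ k t i ≤ kd i)
    (hdyn : ∀ t, t₀ ≤ t → deriv s t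
      = ι t - ((1 + Ξ t) * Matrix.diagonal (k t)).mulVec (fun i => Real.sign (s t i)))
    (hadapt : ∀ t, t₀ ≤ t → ∀ i,
      (k t i < kd i → deriv (fun τ => k τ i) t = (1 - B i i) * |s t i| / γ i) ∧
      (k t i = kd i → deriv (fun τ => k τ i) t = 0)) :
    Differentiable ℝ
        (fun t => (1 / 2) * ∑ i, (s t i) ^ 2 + ∑ i, (γ i / 2) * (k t i - kd i) ^ 2) ∧
      ∀ t, t₀ ≤ t →
        deriv (fun t => (1 / 2) * ∑ i, (s t i) ^ 2
            + ∑ i, (γ i / 2) * (k t i - kd i) ^ 2) t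
          ≤ -∑ i, ε i * |s t i| := by
  have hsd : ∀ t i, HasDerivAt (fun τ => s τ i) (deriv s t i) t := fun t i =>
    (hasDerivAt_pi.1 (hs t).hasDerivAt) i
  have hkd' : ∀ t i, HasDerivAt (fun τ => k τ i) (deriv (fun τ => k τ i) t) t := fun t i =>
    ((hasDerivAt_pi.1 (hkdiff t).hasDerivAt) i).differentiableAt.hasDerivAt
  have hV : ∀ t, HasDerivAt (fun t => (1 / 2) * ∑ i, (s t i) ^ 2
      + ∑ i, (γ i / 2) * (k t i - kd i) ^ 2)
      ((1 / 2) * ∑ i, (2 * s t i * deriv s t i)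
        + ∑ i, (γ i / 2) * (2 * (k t i - kd i) * deriv (fun τ => k τ i) t)) t := by
    intro t
    refine HasDerivAt.add (HasDerivAt.const_mul _ (HasDerivAt.fun_sum fun i _ => ?_))
      (HasDerivAt.fun_sum fun i _ => HasDerivAt.const_mul _ ?_)
    · simpa using (hsd t i).fun_pow 2
    · simpa using ((hkd' t i).sub_const (kd i)).fun_pow 2
  refine ⟨fun t => (hV t).differentiableAt, fun t ht => ?_⟩
  rw [(hV t).deriv, Finset.mul_sum, ← Finset.sum_add_distrib, ← Finset.sum_neg_distrib]
  refine Finset.sum_le_sum fun i _ => ?_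
  have hpos : 0 < 1 - B i i := by linarith [hBii i]
  -- the design equation
  have hdes : kd i - ∑ j, B i j * kd j = a i + ε i := by
    have h := congrFun hsol i
    have hDB : (1 - B i i) * ∑ j, D i j * kd j = ∑ j, B i j * kd j - B i i * kd i := by
      rw [← Finset.sum_erase_eq_sub (Finset.mem_univ i), Finset.mul_sum,
        ← Finset.add_sum_erase _ _ (Finset.mem_univ i), hD i i]
      simp only [if_true, zero_mul, mul_zero, zero_add]
      refine Finset.sum_congr rfl fun j hj => ?_
      rw [hD, if_neg (Finset.ne_of_mem_erase hj).symm]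
      field_simp
    rw [Matrix.sub_mulVec, Matrix.one_mulVec, Pi.sub_apply, hz, eq_div_iff hpos.ne'] at h
    have h2 : (D *ᵥ kd) i = ∑ j, D i j * kd j := rfl
    rw [h2] at h
    linarith
  -- adaptation term
  have had : (γ i / 2) * (2 * (k t i - kd i) * deriv (fun τ => k τ i) t)
      = (k t i - kd i) * (1 - B i i) * |s t i| := by
    rcases (hbound t ht i).2.lt_or_eq with h | h
    · rw [(hadapt t ht i).1 h]
      have := (hγ i).ne'
      field_simp
    · rw [(hadapt t ht i).2 h, h]
      ring
  have hds : deriv s t i = ι t i - k t i * Real.sign (s t i)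
      - ∑ j, Ξ t i j * (k t j * Real.sign (s t j)) := by
    rw [hdyn t ht, ← Matrix.mulVec_mulVec, Matrix.add_mulVec, Matrix.one_mulVec]
    simp only [Pi.sub_apply, Pi.add_apply, Matrix.mulVec_diagonal]
    have : (Ξ t *ᵥ (diagonal (k t) *ᵥ fun i => Real.sign (s t i))) i
        = ∑ j, Ξ t i j * (k t j * Real.sign (s t j)) := by
      simp only [Matrix.mulVec, dotProduct, Matrix.diagonal_apply, ite_mul, zero_mul,
        Finset.sum_ite_eq, Finset.mem_univ, if_true]
    rw [this]
    ring
  have hsg : s t i * Real.sign (s t i) = |s t i| := by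
    rcases lt_trichotomy (s t i) 0 with h | h | h
    · rw [Real.sign_of_neg h, abs_of_neg h]; ring
    · simp [h]
    · rw [Real.sign_of_pos h, abs_of_pos h]; ring
  have hsgn : ∀ x : ℝ, |Real.sign x| ≤ 1 := by
    intro x
    rcases Real.sign_apply_eq x with h | h | h <;> simp [h]
  have h1 : s t i * ι t i ≤ |s t i| * a i :=
    (le_abs_self _).trans (by rw [abs_mul]; gcongr; exact hι t ht i)
  have hX : |∑ j, Ξ t i j * (k t j * Real.sign (s t j))| ≤ ∑ j, B i j * k t j := by
    refine (Finset.abs_sum_le_sum_abs _ _).trans (Finset.sum_le_sum fun j _ => ?_)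
    rw [abs_mul, abs_mul, abs_of_nonneg (hbound t ht j).1]
    have hk0 := (hbound t ht j).1
    refine mul_le_mul (hΞ t ht i j) ?_ (by positivity) (hB i j)
    exact mul_le_of_le_one_right hk0 (hsgn _)
  have h2 : -(s t i * ∑ j, Ξ t i j * (k t j * Real.sign (s t j)))
      ≤ |s t i| * ∑ j, B i j * k t j :=
    (neg_le_abs _).trans (by rw [abs_mul]; gcongr)
  have h3 : ∑ j, B i j * k t j - B i i * k t i ≤ ∑ j, B i j * kd j - B i i * kd i := by
    rw [← Finset.sum_erase_eq_sub (Finset.mem_univ i),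
      ← Finset.sum_erase_eq_sub (Finset.mem_univ i)]
    exact Finset.sum_le_sum fun j _ => mul_le_mul_of_nonneg_left (hbound t ht j).2 (hB i j)
  have h4 := mul_le_mul_of_nonneg_left h3 (abs_nonneg (s t i))
  have h5 : ∑ j, B i j * kd j = kd i - (a i + ε i) := by linarith
  rw [h5] at h4
  have h6 : 1 / 2 * (2 * s t i * deriv s t i) = s t i * ι t i - k t i * |s t i|
      - s t i * ∑ j, Ξ t i j * (k t j * Real.sign (s t j)) := by
    rw [hds, ← hsg]; ring
  rw [had, h6]
  linarith
end

section
/- Let v : ℝ → ℝ be differentiable with v(t) ≥ 0 for all t, let c > 0 and t₀ ∈ ℝ, and suppose v'(t) ≤ −c·√(v(t)) for all t ≥ t₀. Then v(t) = 0 for all t ≥ t₀ + 2√(v(t₀))/c. -/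
/-- Scalar finite-time comparison lemma underlying Theorems 1 and 2: if
`v ≥ 0` is differentiable with `v'(t) ≤ -c √(v t)` for all `t ≥ t₀` and
`c > 0`, then `v(t) = 0` for all `t ≥ t₀ + 2 √(v t₀) / c`. -/
theorem stmt_12 (v : ℝ → ℝ) (hv : Differentiable ℝ v) (hpos : ∀ t, 0 ≤ v t)
    (c t₀ : ℝ) (hc : 0 < c)
    (hder : ∀ t, t₀ ≤ t → deriv v t ≤ -c * Real.sqrt (v t)) :
    ∀ t, t₀ + 2 * Real.sqrt (v t₀) / c ≤ t → v t = 0 := by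
  intro t ht
  by_contra hne
  have hvt : 0 < v t := lt_of_le_of_ne (hpos t) (Ne.symm hne)
  have h0 : 0 ≤ 2 * Real.sqrt (v t₀) / c := by positivity
  have htt : t₀ ≤ t := by linarith
  have hanti : AntitoneOn v (Set.Icc t₀ t) := by
    apply antitoneOn_of_deriv_nonpos (convex_Icc _ _) hv.continuous.continuousOn
      hv.differentiableOn
    intro x hx
    rw [interior_Icc] at hx
    have h1 := hder x hx.1.le
    have h2 := mul_nonneg hc.le (Real.sqrt_nonneg (v x))
    linarith
  have hp : ∀ x ∈ Set.Icc t₀ t, 0 < v x := fun x hx =>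
    lt_of_lt_of_le hvt (hanti hx ⟨htt, le_rfl⟩ hx.2)
  have hd : ∀ x ∈ Set.Icc t₀ t, HasDerivAt (fun y => Real.sqrt (v y) + c / 2 * y)
      (deriv v x / (2 * Real.sqrt (v x)) + c / 2 * 1) x := fun x hx =>
    ((hv x).hasDerivAt.sqrt (hp x hx).ne').add ((hasDerivAt_id x).const_mul (c / 2))
  have hanti2 : AntitoneOn (fun y => Real.sqrt (v y) + c / 2 * y) (Set.Icc t₀ t) := by
    apply antitoneOn_of_deriv_nonpos (convex_Icc _ _)
    · exact fun x hx => (hd x hx).continuousAt.continuousWithinAt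
    · exact fun x hx =>
        (hd x (interior_subset hx)).differentiableAt.differentiableWithinAt
    · intro x hx
      have hx' := interior_subset hx
      rw [(hd x hx').deriv]
      have hs : 0 < Real.sqrt (v x) := Real.sqrt_pos.2 (hp x hx')
      have h1 := hder x hx'.1
      have h2 : deriv v x / (2 * Real.sqrt (v x)) ≤ -(c / 2) := by
        rw [div_le_iff₀ (by positivity)]
        linarith
      linarith
  have h3 := hanti2 ⟨le_rfl, htt⟩ ⟨htt, le_rfl⟩ htt
  have hs : 0 < Real.sqrt (v t) := Real.sqrt_pos.2 hvt
  have h4 : 2 * Real.sqrt (v t₀) ≤ (t - t₀) * c := by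
    rw [← div_le_iff₀ hc]
    linarith
  simp only at h3
  linarith
end
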